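/- Let G be the n-path graph with n ≥ 3 and d = 3, and let x = ∏_{i=2}^{n−1} y_{i k̂_i} ∈ R_G(3), where k̂_i = 3 if i is even and k̂_i = 2 if i is odd. Then the set of minimal primes of the principal ideal (x) ⊆ R_G(3) is exactly {P_2, …, P_{n−1}, Q_2, …, Q_{n−1}} (images of the corresponding ideals of S in R_G(3)). -/

import Mathlib

open MvPolynomial

/-- The variable `y_{i c}` of the polynomial ring `K[y_{ij} : i ∈ [n], j ∈ [3]]`,
with indices `i ∈ {1, …, n}` and `c ∈ {1, 2, 3}` as in the paper
(and junk value `0` for out-of-range indices). -/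
noncomputable def yvar (K : Type) [Field K] (n i c : ℕ) : MvPolynomial (Fin n × Fin 3) K :=
  if h : 1 ≤ i ∧ i ≤ n ∧ 1 ≤ c ∧ c ≤ 3 then
    MvPolynomial.X (⟨i - 1, by omega⟩, ⟨c - 1, by omega⟩)
  else 0

/-- The LSS generator `f_{a(a+1)} = ∑_{k=1}^3 y_{ak} y_{(a+1)k}` associated to the edge
`{a, a+1}` of the `n`-path graph. -/
noncomputable def pathGen (K : Type) [Field K] (n a : ℕ) : MvPolynomial (Fin n × Fin 3) K :=
  ∑ k : Fin 3, yvar K n a (k.1 + 1) * yvar K n (a + 1) (k.1 + 1)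

/-- The LSS ideal `L_G(3) = (f_{12}, …, f_{(n-1)n})` of the `n`-path graph `G`. -/
noncomputable def pathLSS (K : Type) [Field K] (n : ℕ) :
    Ideal (MvPolynomial (Fin n × Fin 3) K) :=
  Ideal.span {g | ∃ a : ℕ, 1 ≤ a ∧ a + 1 ≤ n ∧ g = pathGen K n a}

/-- The ideal generated by the list `F_i` of all generators of `pathLSS` except
`f_{(i-1)i}` and `f_{i(i+1)}`. -/
noncomputable def exceptIdeal (K : Type) [Field K] (n i : ℕ) :
    Ideal (MvPolynomial (Fin n × Fin 3) K) :=
  Ideal.span {g | ∃ a : ℕ, 1 ≤ a ∧ a + 1 ≤ n ∧ a ≠ i - 1 ∧ a ≠ i ∧ g = pathGen K n a}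

/-- The column index `k`: `2` if `i` is even, `3` if `i` is odd. -/
def kcol (i : ℕ) : ℕ := if Even i then 2 else 3

/-- The column index `k̂ = 5 - k`: `3` if `i` is even, `2` if `i` is odd. -/
def khat (i : ℕ) : ℕ := if Even i then 3 else 2

/-- The ideal `P_i = (y_{i1}, y_{i2}, y_{i3}) + (F_i)` of `S`. -/
noncomputable def Pideal (K : Type) [Field K] (n i : ℕ) :
    Ideal (MvPolynomial (Fin n × Fin 3) K) :=
  Ideal.span {yvar K n i 1, yvar K n i 2, yvar K n i 3} ⊔ exceptIdeal K n i

/-- The ideal `Q_i = I_1(Y_i y_i) + (det Y_i, y_{i k̂}) + (F_i)` of `S`, where `Y_i` is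
the `2 × 2` matrix with rows `(y_{(i-1)1}, y_{(i-1)k})`, `(y_{(i+1)1}, y_{(i+1)k})` and
`y_i` is the column vector `(y_{i1}, y_{ik})`. -/
noncomputable def Qideal (K : Type) [Field K] (n i : ℕ) :
    Ideal (MvPolynomial (Fin n × Fin 3) K) :=
  Ideal.span
      {yvar K n (i - 1) 1 * yvar K n i 1 + yvar K n (i - 1) (kcol i) * yvar K n i (kcol i),
       yvar K n (i + 1) 1 * yvar K n i 1 + yvar K n (i + 1) (kcol i) * yvar K n i (kcol i),
       yvar K n (i - 1) 1 * yvar K n (i + 1) (kcol i) -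
         yvar K n (i - 1) (kcol i) * yvar K n (i + 1) 1,
       yvar K n i (khat i)} ⊔ exceptIdeal K n i

/-- The element `x = ∏_{i=2}^{n-1} y_{i k̂ᵢ}` of `S`. -/
noncomputable def pathProd (K : Type) [Field K] (n : ℕ) : MvPolynomial (Fin n × Fin 3) K :=
  ∏ i ∈ Finset.Icc 2 (n - 1), yvar K n i (khat i)

open Polynomial in
theorem lin_coeff_dvd {E : Type} [CommRing E] (a α β : E)
    (h : ∀ s, a ∣ α * s → a ∣ s) (t : E[X]) (ht : Polynomial.C a ∣ (Polynomial.C α * Polynomial.X + Polynomial.C β) * t) : Polynomial.C a ∣ t := by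
  rw [Polynomial.C_dvd_iff_dvd_coeff] at ht ⊢
  have key : ∀ d n, t.natDegree < n + d → a ∣ t.coeff n := by
    intro d
    induction d with
    | zero => intro n hn; rw [coeff_eq_zero_of_natDegree_lt (by simpa using hn)]; simp
    | succ d ih =>
      intro n hn
      have h1 := ih (n+1) (by omega)
      have h2 := ht (n+1)
      have e : ((Polynomial.C α * Polynomial.X + Polynomial.C β) * t).coeff (n+1) = α * t.coeff n + β * t.coeff (n+1) := by
        rw [add_mul, Polynomial.coeff_add, mul_assoc, Polynomial.coeff_C_mul, Polynomial.coeff_C_mul, Polynomial.coeff_X_mul]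
      rw [e] at h2
      exact h _ ((dvd_add_left (h1.mul_left β)).1 h2)
  exact fun n => key (t.natDegree + 1) n (by omega)

open Polynomial in
theorem C_reg {E : Type} [CommRing E] (a α : E)
    (h : ∀ s, a ∣ α * s → a ∣ s) (t : E[X]) (ht : Polynomial.C a ∣ Polynomial.C α * t) : Polynomial.C a ∣ t := by
  rw [Polynomial.C_dvd_iff_dvd_coeff] at ht ⊢
  intro n
  have := ht n
  rw [Polynomial.coeff_C_mul] at this
  exact h _ this

open Polynomial in
theorem lin_prime_aux {A : Type} [CommRing A] [IsDomain A] (F : Type) [Field F] [Algebra A F]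
    [IsFractionRing A F] (a b : A) (ha : a ≠ 0)
    (h : ∀ t, a ∣ b * t → a ∣ t) :
    (Ideal.span {Polynomial.C a * Polynomial.X + Polynomial.C b} : Ideal A[X]).IsPrime := by
  have hpow : ∀ n t, a ∣ b ^ n * t → a ∣ t := by
    intro n
    induction n with
    | zero => intro t; simp
    | succ n ih => intro t ht; exact ih _ (h _ (by rw [← mul_assoc, ← pow_succ']; exact ht))
  obtain ⟨al, hal⟩ : ∃ al : A →+* F, Function.Injective al :=
    ⟨algebraMap A F, IsFractionRing.injective A F⟩
  have haF : al a ≠ 0 := fun h0 => ha (hal (by simpa using h0))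
  let f : A[X] →+* F := eval₂RingHom al (-(al b) / al a)
  have hg : f (Polynomial.C a * Polynomial.X + Polynomial.C b) = 0 := by
    simp only [f, coe_eval₂RingHom, Polynomial.eval₂_add, Polynomial.eval₂_mul, Polynomial.eval₂_C, Polynomial.eval₂_X]
    field_simp
    ring
  have hker : RingHom.ker f = Ideal.span {Polynomial.C a * Polynomial.X + Polynomial.C b} := by
    apply le_antisymm
    · have key : ∀ N, ∀ p : A[X], p.natDegree < N → f p = 0 → p ∈ Ideal.span {Polynomial.C a * Polynomial.X + Polynomial.C b} := by
        intro N
        induction N with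
        | zero => intro p hp; omega
        | succ N ih =>
          intro p hp hfp
          have h1 : al a ^ N * f p = al (∑ i ∈ Finset.range (N+1), p.coeff i * (-b) ^ i * a ^ (N - i)) := by
            simp only [f, coe_eval₂RingHom]
            rw [eval₂_eq_sum_range' al hp, Finset.mul_sum, map_sum]
            apply Finset.sum_congr rfl
            intro i hi
            have hi' : i ≤ N := by simp at hi; omega
            obtain ⟨k, rfl⟩ := Nat.exists_eq_add_of_le hi'
            simp only [map_mul, map_pow, map_neg, Nat.add_sub_cancel_left]
            rw [div_pow, pow_add]
            field_simp
          rw [hfp, mul_zero] at h1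
          have h2 : ∑ i ∈ Finset.range (N+1), p.coeff i * (-b) ^ i * a ^ (N - i) = 0 :=
            hal (by rw [← h1, map_zero])
          rw [Finset.sum_range_succ] at h2
          have h3 : a ∣ ∑ i ∈ Finset.range N, p.coeff i * (-b) ^ i * a ^ (N - i) := by
            apply Finset.dvd_sum
            intro i hi
            have : N - i ≠ 0 := by simp at hi; omega
            exact (dvd_pow_self a this).mul_left _
          have h4 : a ∣ p.coeff N := by
            apply hpow N
            have : b ^ N * p.coeff N = (-1)^N * (p.coeff N * (-b) ^ N * a ^ (N - N)) := by
              rw [neg_pow b]; simp only [Nat.sub_self, pow_zero]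
              have : ((-1:A)^N) * (-1)^N = 1 := by rw [← mul_pow]; simp
              linear_combination (- b ^ N * p.coeff N) * this
            rw [this]
            apply Dvd.dvd.mul_left
            have := (dvd_add_right h3).1 (by rw [h2]; simp)
            exact this
          obtain ⟨c, hc⟩ := h4
          rcases Nat.eq_zero_or_pos N with rfl | hN
          · have : p = Polynomial.C (p.coeff 0) := eq_C_of_natDegree_eq_zero (by omega)
            rw [this] at hfp
            simp only [f, coe_eval₂RingHom, Polynomial.eval₂_C] at hfp
            have : p.coeff 0 = 0 := hal (by rw [hfp, map_zero])
            have : p = 0 := by rw [‹p = _›, this, Polynomial.C_0]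
            rw [this]; exact zero_mem _
          · let q := p - Polynomial.C c * Polynomial.X ^ (N-1) * (Polynomial.C a * Polynomial.X + Polynomial.C b)
            have hq : q ∈ Ideal.span {Polynomial.C a * Polynomial.X + Polynomial.C b} := by
              apply ih
              · rw [Nat.lt_iff_le_pred hN]
                rw [natDegree_le_iff_coeff_eq_zero]
                intro m hm
                obtain ⟨k, rfl⟩ : ∃ k, N = k + 1 := ⟨N-1, by omega⟩
                obtain ⟨j, rfl⟩ : ∃ j, m = j + 1 := ⟨m-1, by simp at hm; omega⟩
                have e : Polynomial.C c * Polynomial.X ^ (k+1-1) * (Polynomial.C a * Polynomial.X + Polynomial.C b) = Polynomial.C (c * a) * Polynomial.X ^ (k+1) + Polynomial.C (c*b) * Polynomial.X^k := by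
                  simp only [Nat.add_sub_cancel, Polynomial.C_mul]; ring
                simp only [q, e, Polynomial.coeff_sub, Polynomial.coeff_add, Polynomial.coeff_C_mul, Polynomial.coeff_X_pow]
                simp at hm
                rcases eq_or_ne j k with rfl | hne
                · simp [hc, mul_comm]
                · rw [coeff_eq_zero_of_natDegree_lt (by omega)]
                  have h7 : j + 1 ≠ k := by omega
                  simp [hne, h7]
              · simp only [q, map_sub, map_mul, hg, hfp]; simp
            have : p = q + Polynomial.C c * Polynomial.X ^ (N-1) * (Polynomial.C a * Polynomial.X + Polynomial.C b) := by simp [q]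
            rw [this]
            exact add_mem hq (Ideal.mul_mem_left _ _ (Ideal.mem_span_singleton_self _))
      exact fun p hp => key _ p (Nat.lt_succ_self _) hp
    · rw [Ideal.span_singleton_le_iff_mem]; exact hg
  rw [← hker]
  exact RingHom.ker_isPrime f

open Polynomial in
theorem lin_prime {A : Type} [CommRing A] [IsDomain A] (a b : A) (ha : a ≠ 0)
    (h : ∀ t, a ∣ b * t → a ∣ t) :
    (Ideal.span {Polynomial.C a * Polynomial.X + Polynomial.C b} : Ideal A[X]).IsPrime :=
  lin_prime_aux (FractionRing A) a b ha h

/-- A vector `a` in `D³` two of whose entries form a regular pair. -/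
def GradeInv {D : Type} [CommRing D] (a : Fin 3 → D) : Prop :=
  ∃ σ : Equiv.Perm (Fin 3), a (σ 0) ≠ 0 ∧ ∀ s, a (σ 0) ∣ a (σ 1) * s → a (σ 0) ∣ s

theorem exists_quot (P : Type) [CommRing P] (g : P) (hg : (Ideal.span {g}).IsPrime) :
    ∃ (Q : Type) (_ : CommRing Q) (_ : IsDomain Q) (mk : P →+* Q), Function.Surjective mk ∧
      (∀ x y, mk x = mk y ↔ ∃ k, x = y + g * k) ∧
      ∀ (R : Type) [CommRing R] (e : P →+* R), e g = 0 →
        ∃ ψ : Q →+* R, ∀ x, ψ (mk x) = e x := by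
  refine ⟨P ⧸ Ideal.span {g}, inferInstance, Ideal.Quotient.isDomain _, Ideal.Quotient.mk _,
    Ideal.Quotient.mk_surjective, ?_, ?_⟩
  · intro x y
    rw [Ideal.Quotient.eq, Ideal.mem_span_singleton]
    exact ⟨fun ⟨k, hk⟩ => ⟨k, by rw [← hk]; ring⟩, fun ⟨k, hk⟩ => ⟨k, by rw [hk]; ring⟩⟩
  · intro R _ e he
    refine ⟨Ideal.Quotient.lift _ e ?_, fun x => Ideal.Quotient.lift_mk _ _ _⟩
    intro x hx
    obtain ⟨k, rfl⟩ := Ideal.mem_span_singleton.1 hx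
    rw [map_mul, he, zero_mul]

open Polynomial in
theorem step_zero (D : Type) [CommRing D] [IsDomain D] (ap aq ar : D) (hp : ap ≠ 0)
    (h : ∀ s, ap ∣ aq * s → ap ∣ s) :
    ∃ (D' : Type) (_ : CommRing D') (_ : IsDomain D') (ι : D →+* D') (yp yq yr : D'),
      (∀ s, yq ∣ yr * s → yq ∣ s) ∧
      ι ap * yp + ι aq * yq + ι ar * yr = 0 ∧
      ∀ (R : Type) [CommRing R] (φ : D →+* R) (zp zq zr : R),
        φ ap * zp + φ aq * zq + φ ar * zr = 0 →
        ∃ ψ : D' →+* R, (∀ d, ψ (ι d) = φ d) ∧ ψ yp = zp ∧ ψ yq = zq ∧ ψ yr = zr := by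
  let a : D[X][X] := Polynomial.C (Polynomial.C ap)
  let b : D[X][X] := Polynomial.C (Polynomial.C aq) * Polynomial.X + Polynomial.C (Polynomial.C ar * Polynomial.X)
  let g : D[X][X][X] := Polynomial.C a * Polynomial.X + Polynomial.C b
  have hprime : (Ideal.span {g} : Ideal D[X][X][X]).IsPrime := by
    apply lin_prime
    · exact Polynomial.C_ne_zero.2 (Polynomial.C_ne_zero.2 hp)
    · intro t ht
      exact lin_coeff_dvd (Polynomial.C ap : D[X]) (Polynomial.C aq) (Polynomial.C ar * Polynomial.X) (fun s hs => C_reg ap aq h s hs) t ht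
  obtain ⟨Q, i1, i2, mk, hsurj, heq, hlift⟩ := exists_quot _ g hprime
  let cc : D →+* D[X][X][X] := Polynomial.C.comp (Polynomial.C.comp Polynomial.C)
  have hgen : cc ap * Polynomial.X + cc aq * Polynomial.C Polynomial.X + cc ar * Polynomial.C (Polynomial.C Polynomial.X) = g := by
    simp only [cc, g, a, b, RingHom.comp_apply, Polynomial.C_add, Polynomial.C_mul]
    ring
  refine ⟨Q, i1, i2, mk.comp cc, mk Polynomial.X, mk (Polynomial.C Polynomial.X), mk (Polynomial.C (Polynomial.C Polynomial.X)), ?_, ?_, ?_⟩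
  · intro s
    obtain ⟨s, rfl⟩ := hsurj s
    rintro ⟨m, hm⟩
    obtain ⟨m, rfl⟩ := hsurj m
    rw [← map_mul, ← map_mul, heq] at hm
    obtain ⟨k, hk⟩ := hm
    let ev : D[X][X] →+* D[X] := evalRingHom 0
    let π : D[X][X][X] →+* D[X][X] := mapRingHom ev
    let inc : D[X][X] →+* D[X][X][X] := mapRingHom Polynomial.C
    have hπinc : ∀ e, π (inc e) = e := by
      intro e
      simp only [π, inc, coe_mapRingHom, Polynomial.map_map]
      have : ev.comp Polynomial.C = RingHom.id D[X] := by ext <;> simp [ev]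
      rw [this, Polynomial.map_id]
    have hπ : ∀ f, π f = 0 → Polynomial.C Polynomial.X ∣ f := by
      intro f hf
      rw [Polynomial.C_dvd_iff_dvd_coeff]
      intro n
      rw [Polynomial.X_dvd_iff]
      have := congrArg (fun p => Polynomial.coeff p n) hf
      simpa [π, ev, coeff_zero_eq_eval_zero] using this
    have h1 := congrArg π hk
    have hπg : π g = Polynomial.C (Polynomial.C ap) * Polynomial.X + Polynomial.C (Polynomial.C ar * Polynomial.X) := by
      simp [π, g, ev, a, b]
    have hπX : π (Polynomial.C Polynomial.X) = 0 := by simp [π, ev]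
    have hπX2 : π (Polynomial.C (Polynomial.C Polynomial.X)) = Polynomial.C Polynomial.X := by simp [π, ev]
    rw [map_add, map_mul, map_mul, map_mul, hπg, hπX, hπX2, zero_mul, zero_add] at h1
    have h2 : (Polynomial.C Polynomial.X : D[X][X]) ∣ π k := by
      have h3 : (Polynomial.C Polynomial.X : D[X][X]) ∣ Polynomial.C (Polynomial.C ap) * Polynomial.X * π k := by
        refine ⟨π s - Polynomial.C (Polynomial.C ar) * π k, ?_⟩
        rw [Polynomial.C_mul] at h1
        linear_combination (-1 : D[X][X]) * h1
      rw [Polynomial.C_dvd_iff_dvd_coeff] at h3 ⊢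
      intro n
      have h4 := h3 (n+1)
      rw [mul_assoc, Polynomial.coeff_C_mul, Polynomial.coeff_X_mul] at h4
      rw [Polynomial.X_dvd_iff] at h4 ⊢
      rw [Polynomial.coeff_C_mul] at h4
      exact (mul_eq_zero.1 h4).resolve_left hp
    obtain ⟨l, hl⟩ := h2
    have h5 : π (s + g * inc (-l)) = 0 := by
      rw [map_add, map_mul, hπinc, hπg]
      have hX : (Polynomial.C Polynomial.X : D[X][X]) ≠ 0 := by simp
      apply mul_left_cancel₀ hX
      rw [mul_add, h1, hl]
      ring
    obtain ⟨w, hw⟩ := hπ _ h5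
    refine ⟨mk w, ?_⟩
    rw [← map_mul, heq, ← hw]
    exact ⟨inc l, by rw [map_neg]; ring⟩
  · simp only [RingHom.comp_apply, ← map_mul, ← map_add]
    rw [hgen, ← map_zero mk, heq]
    exact ⟨1, by rw [zero_add, mul_one]⟩
  · intro R _ φ zp zq zr hz
    let e : D[X][X][X] →+* R := eval₂RingHom (eval₂RingHom (eval₂RingHom φ zr) zq) zp
    have hcc : ∀ d, e (cc d) = φ d := by intro d; simp [e, cc]
    have he1 : e Polynomial.X = zp := by simp [e]
    have he2 : e (Polynomial.C Polynomial.X) = zq := by simp [e]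
    have he3 : e (Polynomial.C (Polynomial.C Polynomial.X)) = zr := by simp [e]
    have heg : e g = 0 := by
      rw [← hgen]; simp only [map_add, map_mul, hcc, he1, he2, he3, hz]
    obtain ⟨ψ, hψ⟩ := hlift R e heg
    exact ⟨ψ, fun d => by rw [RingHom.comp_apply, hψ, hcc], by rw [hψ, he1], by rw [hψ, he2],
      by rw [hψ, he3]⟩

theorem step_one (D : Type) [CommRing D] [IsDomain D] (a : Fin 3 → D) (h : GradeInv a) :
    ∃ (D' : Type) (_ : CommRing D') (_ : IsDomain D') (ι : D →+* D') (y : Fin 3 → D'),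
      Function.Injective ι ∧ GradeInv y ∧ ∑ c, ι (a c) * y c = 0 ∧
      ∀ (R : Type) [CommRing R] (φ : D →+* R) (z : Fin 3 → R),
        ∑ c, φ (a c) * z c = 0 →
        ∃ ψ : D' →+* R, (∀ d, ψ (ι d) = φ d) ∧ ∀ c, ψ (y c) = z c := by
  obtain ⟨σ, hp, hreg⟩ := h
  obtain ⟨D', i1, i2, ι, yp, yq, yr, h1, h2, h3⟩ :=
    step_zero D (a (σ 0)) (a (σ 1)) (a (σ 2)) hp hreg
  refine ⟨D', i1, i2, ι, fun c => ![yp, yq, yr] (σ.symm c), ?_, ?_, ?_, ?_⟩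
  · obtain ⟨ψ, hψ, -⟩ := h3 D (RingHom.id D) 0 0 0 (by simp)
    exact Function.LeftInverse.injective (g := ψ) hψ
  · refine ⟨(finRotate 3).trans σ, ?_, ?_⟩
    · have e : (finRotate 3) 0 = 1 := by decide
      simp only [Equiv.trans_apply, Equiv.symm_apply_apply, e]
      intro h0
      obtain ⟨ψ, hψ, -, h5, -⟩ := h3 D (RingHom.id D) (- a (σ 1)) (a (σ 0)) 0 (by simp; ring)
      apply hp
      rw [← h5]
      have : yq = 0 := by simpa using h0
      rw [this, map_zero]
    · have e : (finRotate 3) 0 = 1 := by decide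
      have e' : (finRotate 3) 1 = 2 := by decide
      simp only [Equiv.trans_apply, Equiv.symm_apply_apply, e, e']
      simpa using h1
  · rw [← Equiv.sum_comp σ, Fin.sum_univ_three]
    simpa using h2
  · intro R _ φ z hz
    rw [← Equiv.sum_comp σ, Fin.sum_univ_three] at hz
    obtain ⟨ψ, hψ, h4, h5, h6⟩ := h3 R φ _ _ _ hz
    refine ⟨ψ, hψ, ?_⟩
    intro c
    obtain ⟨c, rfl⟩ := σ.surjective c
    simp only [Equiv.symm_apply_apply]
    fin_cases c <;> simp [h4, h5, h6]

theorem chain (D : Type) [CommRing D] [IsDomain D] (a : Fin 3 → D) (h : GradeInv a) (m : ℕ) :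
    ∃ (D' : Type) (_ : CommRing D') (_ : IsDomain D') (ι : D →+* D') (y : ℕ → Fin 3 → D'),
      Function.Injective ι ∧ GradeInv (y m) ∧ (∀ c, y 0 c = ι (a c)) ∧
      (∀ k < m, ∑ c, y k c * y (k+1) c = 0) ∧
      ∀ (R : Type) [CommRing R] (φ : D →+* R) (z : ℕ → Fin 3 → R),
        (∀ c, z 0 c = φ (a c)) → (∀ k < m, ∑ c, z k c * z (k+1) c = 0) →
        ∃ ψ : D' →+* R, (∀ d, ψ (ι d) = φ d) ∧ ∀ k ≤ m, ∀ c, ψ (y k c) = z k c := by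
  induction m with
  | zero =>
    refine ⟨D, inferInstance, inferInstance, RingHom.id D, fun _ => a, fun _ _ h => h, h,
      fun _ => rfl, by simp, ?_⟩
    intro R _ φ z hz _
    refine ⟨φ, fun _ => rfl, ?_⟩
    intro k hk c
    obtain rfl : k = 0 := by omega
    exact (hz c).symm
  | succ m ih =>
    obtain ⟨D1, i1, i2, ι1, y1, hinj1, hg1, hz1, hr1, hu1⟩ := ih
    obtain ⟨D2, i3, i4, ι2, y2, hinj2, hg2, hr2, hu2⟩ := step_one D1 (y1 m) hg1
    refine ⟨D2, i3, i4, ι2.comp ι1, fun k => if k ≤ m then fun c => ι2 (y1 k c) else y2,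
      ?_, ?_, ?_, ?_, ?_⟩
    · simpa using hinj2.comp hinj1
    · simpa using hg2
    · intro c; simp [hz1]
    · intro k hk
      rcases Nat.lt_succ_iff_lt_or_eq.1 hk with hk | rfl
      · have h1 : k ≤ m := by omega
        have h2 : k + 1 ≤ m := by omega
        simp only [h1, h2, if_true, ← map_mul, ← map_sum, hr1 k hk, map_zero]
      · simpa using hr2
    · intro R _ φ z hz hr
      obtain ⟨ψ1, h1, h2⟩ := hu1 R φ z hz (fun k hk => hr k (by omega))
      obtain ⟨ψ2, h3, h4⟩ := hu2 R ψ1 (z (m+1)) (by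
        simp only [h2 m le_rfl]; exact hr m (by omega))
      refine ⟨ψ2, by simp [h3, h1], ?_⟩
      intro k hk c
      by_cases hkm : k ≤ m
      · simp [hkm, h3, h2 k hkm]
      · obtain rfl : k = m + 1 := by omega
        simp [h4]

open Polynomial in
theorem chain_col (B : Type) [CommRing B] [IsDomain B] (σ : Equiv.Perm (Fin 3)) (u v : B)
    (hu : u ≠ 0) (m : ℕ) :
    ∃ (D' : Type) (_ : CommRing D') (_ : IsDomain D') (ι : B →+* D') (y : ℕ → Fin 3 → D'),
      Function.Injective ι ∧ y 0 (σ 1) = ι u ∧ y 0 (σ 2) = ι v ∧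
      (∀ k < m, ∑ c, y k c * y (k+1) c = 0) ∧
      ∀ (R : Type) [CommRing R] (φ : B →+* R) (z : ℕ → Fin 3 → R),
        z 0 (σ 1) = φ u → z 0 (σ 2) = φ v → (∀ k < m, ∑ c, z k c * z (k+1) c = 0) →
        ∃ ψ : D' →+* R, (∀ d, ψ (ι d) = φ d) ∧ ∀ k ≤ m, ∀ c, ψ (y k c) = z k c := by
  obtain ⟨D, i1, i2, ι, y, h1, -, h2, h3, h4⟩ :=
    chain B[X] (fun c => ![Polynomial.X, Polynomial.C u, Polynomial.C v] (σ.symm c)) ⟨σ, by simp, by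
      intro s hs
      simp only [Equiv.symm_apply_apply] at hs ⊢
      simp only [Matrix.cons_val_zero, Matrix.cons_val_one] at hs ⊢
      rw [Polynomial.X_dvd_iff] at hs ⊢
      rw [Polynomial.coeff_C_mul] at hs
      exact (mul_eq_zero.1 hs).resolve_left hu⟩ m
  refine ⟨D, i1, i2, ι.comp Polynomial.C, y, ?_, ?_, ?_, h3, ?_⟩
  · simpa using h1.comp Polynomial.C_injective
  · simp [h2]
  · simp [h2]
  · intro R _ φ z hz1 hz2 hz
    obtain ⟨ψ, h5, h6⟩ := h4 R (eval₂RingHom φ (z 0 (σ 0))) z (by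
      intro c
      obtain ⟨c, rfl⟩ := σ.surjective c
      fin_cases c <;> simp [hz1, hz2]) hz
    exact ⟨ψ, by simp [h5], h6⟩

theorem tower (B : Type) [CommRing B] [IsDomain B] (σ : Equiv.Perm (Fin 3)) (u u' w w' : B)
    (hu : u ≠ 0) (hw : w ≠ 0) (l r : ℕ) :
    ∃ (D' : Type) (_ : CommRing D') (_ : IsDomain D') (ι : B →+* D') (L R : ℕ → Fin 3 → D'),
      L 0 (σ 1) = ι u ∧ L 0 (σ 2) = ι u' ∧ R 0 (σ 1) = ι w ∧ R 0 (σ 2) = ι w' ∧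
      (∀ k < l, ∑ c, L k c * L (k+1) c = 0) ∧
      (∀ k < r, ∑ c, R k c * R (k+1) c = 0) ∧
      ∀ (T : Type) [CommRing T] (φ : B →+* T) (y z : ℕ → Fin 3 → T),
        y 0 (σ 1) = φ u → y 0 (σ 2) = φ u' → z 0 (σ 1) = φ w → z 0 (σ 2) = φ w' →
        (∀ k < l, ∑ c, y k c * y (k+1) c = 0) →
        (∀ k < r, ∑ c, z k c * z (k+1) c = 0) →
        ∃ ψ : D' →+* T, (∀ d, ψ (ι d) = φ d) ∧ (∀ k ≤ l, ∀ c, ψ (L k c) = y k c) ∧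
          (∀ k ≤ r, ∀ c, ψ (R k c) = z k c) := by
  obtain ⟨D, i1, i2, ι, R, h1, h2, h3, h4, h5⟩ := chain_col B σ w w' hw r
  obtain ⟨D', i3, i4, ι', L, h6, h7, h8, h9, h10⟩ := chain_col D σ (ι u) (ι u')
    (fun h => hu (h1 (by rw [h, map_zero]))) l
  refine ⟨D', i3, i4, ι'.comp ι, L, fun k c => ι' (R k c), h7, h8, by simp [h2], by simp [h3], h9,
    ?_, ?_⟩
  · intro k hk
    simp only [← map_mul, ← map_sum, h4 k hk, map_zero]
  · intro T _ φ y z e1 e2 e3 e4 e5 e6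
    obtain ⟨ψ, h11, h12⟩ := h5 T φ z e3 e4 e6
    obtain ⟨ψ', h13, h14⟩ := h10 T ψ y (by rw [e1, h11]) (by rw [e2, h11]) e5
    exact ⟨ψ', by simp [h13, h11], h14, by intro k hk c; rw [h13, h12 k hk]⟩

/-- The monomial `∏ x_i ^ a_i z_i ^ b_i`. -/
def mon {R : Type} [CommRing R] (x z : Fin 3 → R) (a b : Fin 3 → ℕ) : R :=
  ∏ i, x i ^ a i * z i ^ b i

theorem mon_left {R : Type} [CommRing R] (x z : Fin 3 → R) (a b : Fin 3 → ℕ) (j : Fin 3) :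
    mon x z (a + Pi.single j 1) b = x j * mon x z a b := by
  fin_cases j <;> simp [mon, Fin.prod_univ_three, Pi.single_apply, pow_add] <;> ring

theorem mon_right {R : Type} [CommRing R] (x z : Fin 3 → R) (a b : Fin 3 → ℕ) (j : Fin 3) :
    mon x z a (b + Pi.single j 1) = z j * mon x z a b := by
  fin_cases j <;> simp [mon, Fin.prod_univ_three, Pi.single_apply, pow_add] <;> ring

theorem exists_sub_single (a : Fin 3 → ℕ) (j : Fin 3) (h : 0 < a j) :
    ∃ a0 : Fin 3 → ℕ, a = a0 + Pi.single j 1 := by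
  refine ⟨fun i => if i = j then a j - 1 else a i, ?_⟩
  ext i
  by_cases hij : i = j
  · subst hij; simp; omega
  · simp [hij]

theorem toric_comb {R : Type} [CommRing R] (x z : Fin 3 → R)
    (h : ∀ i j, x i * z j = x j * z i) (d : ℕ) : ∀ a b a' b' : Fin 3 → ℕ,
    ∑ i, a i = d → ∑ i, a' i = d → a + b = a' + b' → mon x z a b = mon x z a' b' := by
  induction d with
  | zero =>
    intro a b a' b' h1 h2 h3
    have e1 : a = 0 := by
      ext i
      exact (Finset.sum_eq_zero_iff.1 h1) i (Finset.mem_univ _)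
    have e2 : a' = 0 := by
      ext i
      exact (Finset.sum_eq_zero_iff.1 h2) i (Finset.mem_univ _)
    subst e1 e2
    rw [zero_add, zero_add] at h3
    rw [h3]
  | succ d ih =>
    intro a b a' b' h1 h2 h3
    have ex : ∀ a : Fin 3 → ℕ, ∑ i, a i = d + 1 → ∃ j, 0 < a j := by
      intro a ha
      by_contra hc
      push Not at hc
      have : ∑ i, a i = 0 := Finset.sum_eq_zero (fun i _ => by have := hc i; omega)
      omega
    have sm : ∀ (a : Fin 3 → ℕ) j, ∑ i, (a + Pi.single j 1 : Fin 3 → ℕ) i = d + 1 → ∑ i, a i = d := by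
      intro a j hj
      simp only [Pi.add_apply, Finset.sum_add_distrib, Finset.sum_pi_single', Finset.mem_univ,
        if_true] at hj
      omega
    obtain ⟨j, hj⟩ := ex a' h2
    obtain ⟨a'', rfl⟩ := exists_sub_single a' j hj
    rw [mon_left]
    by_cases haj : 0 < a j
    · obtain ⟨a0, rfl⟩ := exists_sub_single a j haj
      rw [mon_left, ih a0 b a'' b' (sm _ _ h1) (sm _ _ h2)]
      apply add_right_cancel (b := Pi.single j 1)
      rw [add_right_comm, h3, add_right_comm]
    · have hbj : 0 < b j := by
        have := congrFun h3 j
        simp only [Pi.add_apply, Pi.single_eq_same] at this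
        omega
      obtain ⟨b0, rfl⟩ := exists_sub_single b j hbj
      obtain ⟨i, hi⟩ := ex a h1
      obtain ⟨a0, rfl⟩ := exists_sub_single a i hi
      rw [mon_left, mon_right, ← mul_assoc, h i j, mul_assoc, ← mon_right,
        ih a0 (b0 + Pi.single i 1) a'' b' (sm _ _ h1) (sm _ _ h2)]
      apply add_right_cancel (b := Pi.single j 1)
      rw [add_right_comm a'', ← h3]
      abel

theorem det_base (K : Type) [Field K] :
    ∃ (B : Type) (_ : CommRing B) (_ : IsDomain B) (κ : K →+* B) (x z : Fin 3 → B),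
      (∀ i, x i ≠ 0) ∧ (∀ i j, x i * z j = x j * z i) ∧
      ∀ (R : Type) [CommRing R] (φ : K →+* R) (x' z' : Fin 3 → R),
        (∀ i j, x' i * z' j = x' j * z' i) →
        ∃ ψ : B →+* R, (∀ k, ψ (κ k) = φ k) ∧ (∀ i, ψ (x i) = x' i) ∧ (∀ i, ψ (z i) = z' i) := by
  let f : MvPolynomial (Fin 3 ⊕ Fin 3) K →ₐ[K] MvPolynomial (Option (Fin 3)) K :=
    MvPolynomial.aeval (Sum.elim (fun i => X (some i) * X none) (fun i => X (some i)))
  let θ : (Fin 3 ⊕ Fin 3 →₀ ℕ) → (Option (Fin 3) →₀ ℕ) := fun m =>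
    Finsupp.equivFunOnFinite.symm (fun o => match o with
      | none => ∑ i, m (Sum.inl i)
      | some i => m (Sum.inl i) + m (Sum.inr i))
  have hfθ : ∀ m, f (monomial m 1) = monomial (θ m) 1 := by
    intro m
    rw [MvPolynomial.aeval_monomial, MvPolynomial.monomial_eq, Finsupp.prod_fintype _ _ (by simp),
      Finsupp.prod_fintype _ _ (by simp), Fintype.prod_sum_type, Fintype.prod_option]
    simp only [θ, Sum.elim_inl, Sum.elim_inr, Fin.prod_univ_three, Fin.sum_univ_three,
      Finsupp.equivFunOnFinite_symm_apply_apply, map_one, pow_add, mul_pow]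
    ring
  have hker : ∀ (R : Type) [CommRing R] (φ : K →+* R) (x' z' : Fin 3 → R),
        (∀ i j, x' i * z' j = x' j * z' i) → ∀ p, f p = 0 →
        MvPolynomial.eval₂Hom φ (Sum.elim x' z') p = 0 := by
    intro R _ φ x' z' h p hp
    let _ := φ.toAlgebra
    let M : (Fin 3 ⊕ Fin 3 →₀ ℕ) → R := fun m =>
      mon x' z' (fun i => m (Sum.inl i)) (fun i => m (Sum.inr i))
    have hfac : Function.FactorsThrough M θ := by
      intro m m' hmm
      have h1 : ∀ o, θ m o = θ m' o := fun o => by rw [hmm]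
      refine toric_comb x' z' h _ _ _ _ _ (by simpa [θ] using h1 none) rfl ?_
      ext i
      exact h1 (some i)
    let g := Function.extend θ M 0
    have hg : ∀ m, g (θ m) = M m := fun m => hfac.extend_apply 0 m
    let G : MvPolynomial (Option (Fin 3)) K →ₗ[K] R :=
      (MvPolynomial.basisMonomials (Option (Fin 3)) K).constr K g
    have hG : ∀ t, G (monomial t 1) = g t := by
      intro t
      have := (MvPolynomial.basisMonomials (Option (Fin 3)) K).constr_basis K g t
      simpa using this
    have key : (MvPolynomial.aeval (Sum.elim x' z') :
        MvPolynomial (Fin 3 ⊕ Fin 3) K →ₐ[K] R).toLinearMap = G.comp f.toLinearMap := by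
      apply (MvPolynomial.basisMonomials (Fin 3 ⊕ Fin 3) K).ext
      intro m
      simp only [MvPolynomial.coe_basisMonomials, LinearMap.comp_apply, AlgHom.toLinearMap_apply,
        hfθ, hG, hg]
      rw [MvPolynomial.aeval_monomial, Finsupp.prod_fintype _ _ (by simp), Fintype.prod_sum_type]
      simp [M, mon, Finset.prod_mul_distrib]
    have h2 := congrArg (fun l => l p) key
    simp only [LinearMap.comp_apply, AlgHom.toLinearMap_apply, hp, map_zero] at h2
    exact h2
  let mk := Ideal.Quotient.mk (RingHom.ker f)
  have hmk : ∀ a b, mk a = mk b ↔ f a = f b := by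
    intro a b
    rw [Ideal.Quotient.eq, RingHom.mem_ker, map_sub, sub_eq_zero]
  refine ⟨MvPolynomial (Fin 3 ⊕ Fin 3) K ⧸ RingHom.ker f, inferInstance,
    (have := RingHom.ker_isPrime f; Ideal.Quotient.isDomain _), mk.comp MvPolynomial.C,
    fun i => mk (X (Sum.inl i)), fun i => mk (X (Sum.inr i)), ?_, ?_, ?_⟩
  · intro i hi
    rw [← map_zero mk, hmk] at hi
    simp [f] at hi
  · intro i j
    rw [← map_mul, ← map_mul, hmk]
    simp only [f, map_mul, MvPolynomial.aeval_X, Sum.elim_inl, Sum.elim_inr]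
    ring
  · intro R _ φ x' z' h
    refine ⟨Ideal.Quotient.lift _ (MvPolynomial.eval₂Hom φ (Sum.elim x' z'))
      (fun p hp => hker R φ x' z' h p hp), ?_, ?_, ?_⟩
    · intro k
      exact (Ideal.Quotient.lift_mk _ _ _).trans (by simp)
    · intro i
      exact (Ideal.Quotient.lift_mk _ _ _).trans (by simp)
    · intro i
      exact (Ideal.Quotient.lift_mk _ _ _).trans (by simp)

theorem free_base (K : Type) [Field K] :
    ∃ (B : Type) (_ : CommRing B) (_ : IsDomain B) (κ : K →+* B) (x : Fin 4 → B),
      (∀ i, x i ≠ 0) ∧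
      ∀ (R : Type) [CommRing R] (φ : K →+* R) (x' : Fin 4 → R),
        ∃ ψ : B →+* R, (∀ k, ψ (κ k) = φ k) ∧ (∀ i, ψ (x i) = x' i) :=
  ⟨MvPolynomial (Fin 4) K, inferInstance, inferInstance, MvPolynomial.C, X,
    fun i => MvPolynomial.X_ne_zero i,
    fun R _ φ x' => ⟨MvPolynomial.eval₂Hom φ x', by simp, by simp⟩⟩

theorem prime_of_model {τ K : Type} [Field K] (I : Ideal (MvPolynomial τ K)) (D : Type)
    [CommRing D] [IsDomain D] (κ : K →+* D) (Y : τ → D)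
    (hI : I ≤ RingHom.ker (MvPolynomial.eval₂Hom κ Y))
    (ψ : D →+* MvPolynomial τ K ⧸ I)
    (h1 : ∀ k, ψ (κ k) = Ideal.Quotient.mk I (MvPolynomial.C k))
    (h2 : ∀ v, ψ (Y v) = Ideal.Quotient.mk I (MvPolynomial.X v)) : I.IsPrime := by
  have hcomp : ψ.comp (MvPolynomial.eval₂Hom κ Y) = Ideal.Quotient.mk I := by
    apply MvPolynomial.ringHom_ext
    · intro k; simp [h1]
    · intro v; simp [h2]
  have : I = RingHom.ker (MvPolynomial.eval₂Hom κ Y) := by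
    apply le_antisymm hI
    intro p hp
    rw [← Ideal.Quotient.eq_zero_iff_mem, ← hcomp, RingHom.comp_apply,
      (RingHom.mem_ker).1 hp, map_zero]
  rw [this]
  exact RingHom.ker_isPrime _

theorem yvar_eq (K : Type) [Field K] (n i : ℕ) (c : Fin 3) (h1 : 1 ≤ i) (h2 : i ≤ n) :
    yvar K n i (c.1 + 1) = MvPolynomial.X (⟨i - 1, by omega⟩, c) := by
  rw [yvar, dif_pos ⟨h1, h2, by omega, by omega⟩]
  rfl

theorem eval_yvar {K D : Type} [Field K] [CommRing D] (n : ℕ) (κ : K →+* D) (Z : ℕ → Fin 3 → D)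
    (i : ℕ) (c : Fin 3) (h1 : 1 ≤ i) (h2 : i ≤ n) :
    MvPolynomial.eval₂Hom κ (fun v : Fin n × Fin 3 => Z (v.1.1 + 1) v.2) (yvar K n i (c.1 + 1))
      = Z i c := by
  rw [yvar_eq K n i c h1 h2]
  simp [Nat.sub_add_cancel h1]

theorem eval_pathGen {K D : Type} [Field K] [CommRing D] (n : ℕ) (κ : K →+* D)
    (Z : ℕ → Fin 3 → D) (a : ℕ) (h1 : 1 ≤ a) (h2 : a + 1 ≤ n) :
    MvPolynomial.eval₂Hom κ (fun v : Fin n × Fin 3 => Z (v.1.1 + 1) v.2) (pathGen K n a)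
      = ∑ c, Z a c * Z (a + 1) c := by
  rw [pathGen, map_sum]
  apply Finset.sum_congr rfl
  intro c _
  rw [map_mul, eval_yvar n κ Z a c h1 (by omega), eval_yvar n κ Z (a + 1) c (by omega) h2]

theorem prime_mid (K : Type) [Field K] (n i : ℕ) (hi : 2 ≤ i) (hin : i + 1 ≤ n)
    (σ : Equiv.Perm (Fin 3)) (J : Set (MvPolynomial (Fin n × Fin 3) K))
    (I : Ideal (MvPolynomial (Fin n × Fin 3) K)) (hI : I = Ideal.span J ⊔ exceptIdeal K n i)
    (B : Type) [CommRing B] [IsDomain B] (κ : K →+* B) (u u' w w' : B) (v : Fin 3 → B)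
    (hu : u ≠ 0) (hw : w ≠ 0) (φ : B →+* MvPolynomial (Fin n × Fin 3) K ⧸ I)
    (hφ : ∀ k, φ (κ k) = Ideal.Quotient.mk I (MvPolynomial.C k))
    (hφu : φ u = Ideal.Quotient.mk I (yvar K n (i - 1) ((σ 1).1 + 1)))
    (hφu' : φ u' = Ideal.Quotient.mk I (yvar K n (i - 1) ((σ 2).1 + 1)))
    (hφw : φ w = Ideal.Quotient.mk I (yvar K n (i + 1) ((σ 1).1 + 1)))
    (hφw' : φ w' = Ideal.Quotient.mk I (yvar K n (i + 1) ((σ 2).1 + 1)))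
    (hφv : ∀ c, φ (v c) = Ideal.Quotient.mk I (yvar K n i (c.1 + 1)))
    (hJ : ∀ (D : Type) [CommRing D] (ev : MvPolynomial (Fin n × Fin 3) K →+* D) (ι : B →+* D),
      ev (yvar K n (i - 1) ((σ 1).1 + 1)) = ι u →
      ev (yvar K n (i - 1) ((σ 2).1 + 1)) = ι u' →
      ev (yvar K n (i + 1) ((σ 1).1 + 1)) = ι w →
      ev (yvar K n (i + 1) ((σ 2).1 + 1)) = ι w' →
      (∀ c : Fin 3, ev (yvar K n i (c.1 + 1)) = ι (v c)) → ∀ g ∈ J, ev g = 0) :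
    I.IsPrime := by
  obtain ⟨D, i1, i2, ι, L, R, e1, e2, e3, e4, hL, hR, huniv⟩ :=
    tower B σ u u' w w' hu hw (i - 2) (n - i - 1)
  let Z : ℕ → Fin 3 → D := fun j c =>
    if j = i then ι (v c) else if i < j then R (j - i - 1) c else L (i - 1 - j) c
  have hexc : ∀ a, 1 ≤ a → a + 1 ≤ n → a ≠ i - 1 → a ≠ i →
      Ideal.Quotient.mk I (pathGen K n a) = 0 := by
    intro a h1 h2 h3 h4
    rw [Ideal.Quotient.eq_zero_iff_mem, hI]
    exact Ideal.mem_sup_right (Ideal.subset_span ⟨a, h1, h2, h3, h4, rfl⟩)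
  obtain ⟨ψ, hψ, hψL, hψR⟩ := huniv _ φ
    (fun k c => Ideal.Quotient.mk I (yvar K n (i - 1 - k) (c.1 + 1)))
    (fun k c => Ideal.Quotient.mk I (yvar K n (i + 1 + k) (c.1 + 1)))
    hφu.symm hφu'.symm hφw.symm hφw'.symm
    (by
      intro k hk
      have := hexc (i - 1 - (k + 1)) (by omega) (by omega) (by omega) (by omega)
      rw [pathGen, map_sum] at this
      rw [← this]
      apply Finset.sum_congr rfl
      intro c _
      rw [map_mul, mul_comm, show i - 1 - (k + 1) + 1 = i - 1 - k by omega])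
    (by
      intro k hk
      have := hexc (i + 1 + k) (by omega) (by omega) (by omega) (by omega)
      rw [pathGen, map_sum] at this
      rw [← this]
      apply Finset.sum_congr rfl
      intro c _
      rw [map_mul]; rfl)
  have hZ1 : Z (i - 1) = L 0 := by
    funext c
    have h1 : i - 1 ≠ i := by omega
    have h2 : ¬ i < i - 1 := by omega
    simp only [Z, if_neg h1, if_neg h2, Nat.sub_self]
  have hZ2 : Z (i + 1) = R 0 := by
    funext c
    simp [Z]
  have hZi : ∀ c, Z i c = ι (v c) := by intro c; simp [Z]
  refine prime_of_model I D (ι.comp κ) (fun v => Z (v.1.1 + 1) v.2) ?_ ψ ?_ ?_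
  · rw [hI]
    apply sup_le
    · rw [Ideal.span_le]
      intro g hg
      apply hJ D _ ι _ _ _ _ _ g hg
      · rw [eval_yvar _ _ _ _ _ (by omega) (by omega), hZ1, e1]
      · rw [eval_yvar _ _ _ _ _ (by omega) (by omega), hZ1, e2]
      · rw [eval_yvar _ _ _ _ _ (by omega) (by omega), hZ2, e3]
      · rw [eval_yvar _ _ _ _ _ (by omega) (by omega), hZ2, e4]
      · intro c
        rw [eval_yvar _ _ _ _ _ (by omega) (by omega), hZi]
    · rw [exceptIdeal, Ideal.span_le]
      rintro g ⟨a, h1, h2, h3, h4, rfl⟩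
      rw [SetLike.mem_coe, RingHom.mem_ker, eval_pathGen _ _ _ _ h1 h2]
      rcases lt_or_gt_of_ne h4 with h5 | h5
      · have g1 : ¬ i < a := by omega
        have g2 : a + 1 ≠ i := by omega
        have g3 : ¬ i < a + 1 := by omega
        simp only [Z, if_neg h4, if_neg g1, if_neg g2, if_neg g3]
        rw [← hL (i - 1 - (a + 1)) (by omega), show i - 1 - (a + 1) + 1 = i - 1 - a by omega]
        exact Finset.sum_congr rfl (fun c _ => mul_comm _ _)
      · have g2 : a + 1 ≠ i := by omega
        have g3 : i < a + 1 := by omega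
        simp only [Z, if_neg h4, if_pos h5, if_neg g2, if_pos g3]
        rw [← hR (a - i - 1) (by omega), show a - i - 1 + 1 = a + 1 - i - 1 by omega]
  · intro k
    rw [RingHom.comp_apply, hψ, hφ]
  · rintro ⟨⟨j, hj⟩, c⟩
    have hX : (MvPolynomial.X (⟨j, hj⟩, c) : MvPolynomial (Fin n × Fin 3) K)
        = yvar K n (j + 1) (c.1 + 1) := by
      rw [yvar_eq K n (j + 1) c (by omega) (by omega)]; rfl
    rw [hX]
    simp only [Z]
    split_ifs with h1 h2
    · rw [hψ, hφv, h1]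
    · rw [hψR _ (by omega), show i + 1 + (j + 1 - i - 1) = j + 1 by omega]
    · rw [hψL _ (by omega), show i - 1 - (i - 1 - (j + 1)) = j + 1 by omega]

theorem exists_perm (i : ℕ) : ∃ σ : Equiv.Perm (Fin 3),
    (σ 0).1 + 1 = khat i ∧ (σ 1).1 + 1 = 1 ∧ (σ 2).1 + 1 = kcol i := by
  unfold khat kcol
  by_cases h : Even i
  · simp only [h, if_true]
    decide
  · simp only [h, if_false]
    decide

theorem Pideal_prime (K : Type) [Field K] (n i : ℕ) (hi : 2 ≤ i) (hin : i + 1 ≤ n) :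
    (Pideal K n i).IsPrime := by
  obtain ⟨σ, h0, h1, h2⟩ := exists_perm i
  obtain ⟨B, i1, i2, κ, x, hx, huniv⟩ := free_base K
  let mk := Ideal.Quotient.mk (Pideal K n i)
  obtain ⟨φ, hφ, hφx⟩ := huniv (MvPolynomial (Fin n × Fin 3) K ⧸ Pideal K n i)
    (mk.comp MvPolynomial.C)
    ![mk (yvar K n (i - 1) ((σ 1).1 + 1)), mk (yvar K n (i - 1) ((σ 2).1 + 1)),
      mk (yvar K n (i + 1) ((σ 1).1 + 1)), mk (yvar K n (i + 1) ((σ 2).1 + 1))]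
  refine prime_mid K n i hi hin σ _ _ rfl B κ (x 0) (x 1) (x 2) (x 3) 0 (hx 0) (hx 2) φ hφ
    (hφx 0) (hφx 1) (hφx 2) (hφx 3) ?_ ?_
  · intro c
    rw [Pi.zero_apply, map_zero]
    symm
    rw [Ideal.Quotient.eq_zero_iff_mem]
    apply Ideal.mem_sup_left
    apply Ideal.subset_span
    fin_cases c <;> simp
  · intro D _ ev ι _ _ _ _ h g hg
    have e0 := h 0
    have e1 := h 1
    have e2 := h 2
    simp only [Pi.zero_apply, map_zero] at e0 e1 e2
    rcases hg with rfl | rfl | rfl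
    · exact e0
    · exact e1
    · exact e2

theorem Qideal_prime (K : Type) [Field K] (n i : ℕ) (hi : 2 ≤ i) (hin : i + 1 ≤ n) :
    (Qideal K n i).IsPrime := by
  obtain ⟨σ, h0, h1, h2⟩ := exists_perm i
  obtain ⟨B, i1, i2, κ, x, z, hx, hxz, huniv⟩ := det_base K
  let mk := Ideal.Quotient.mk (Qideal K n i)
  have hmem : ∀ g ∈ ({yvar K n (i - 1) 1 * yvar K n i 1
          + yvar K n (i - 1) (kcol i) * yvar K n i (kcol i),
       yvar K n (i + 1) 1 * yvar K n i 1 + yvar K n (i + 1) (kcol i) * yvar K n i (kcol i),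
       yvar K n (i - 1) 1 * yvar K n (i + 1) (kcol i) -
         yvar K n (i - 1) (kcol i) * yvar K n (i + 1) 1,
       yvar K n i (khat i)} : Set (MvPolynomial (Fin n × Fin 3) K)), mk g = 0 := by
    intro g hg
    rw [Ideal.Quotient.eq_zero_iff_mem]
    exact Ideal.mem_sup_left (Ideal.subset_span hg)
  have q1 := hmem _ (Or.inl rfl)
  have q2 := hmem _ (Or.inr (Or.inl rfl))
  have q3 := hmem _ (Or.inr (Or.inr (Or.inl rfl)))
  have q4 := hmem _ (Or.inr (Or.inr (Or.inr rfl)))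
  simp only [map_add, map_sub, map_mul] at q1 q2 q3
  obtain ⟨φ, hφ, hφx, hφz⟩ := huniv (MvPolynomial (Fin n × Fin 3) K ⧸ Qideal K n i)
    (mk.comp MvPolynomial.C)
    ![mk (yvar K n (i - 1) 1), mk (yvar K n (i + 1) 1), - mk (yvar K n i (kcol i))]
    ![mk (yvar K n (i - 1) (kcol i)), mk (yvar K n (i + 1) (kcol i)), mk (yvar K n i 1)]
    (by
      intro a b
      fin_cases a <;> fin_cases b <;> simp <;>
      first
        | linear_combination q1
        | linear_combination -q1
        | linear_combination q2
        | linear_combination -q2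
        | linear_combination q3
        | linear_combination -q3)
  refine prime_mid K n i hi hin σ _ _ rfl B κ (x 0) (z 0) (x 1) (z 1)
    (fun c => ![0, z 2, - x 2] (σ.symm c)) (hx 0) (hx 1) φ hφ
    (by rw [h1]; exact hφx 0) (by rw [h2]; exact hφz 0)
    (by rw [h1]; exact hφx 1) (by rw [h2]; exact hφz 1) ?_ ?_
  · intro c
    obtain ⟨c, rfl⟩ := σ.surjective c
    rw [Equiv.symm_apply_apply]
    fin_cases c
    · show φ 0 = mk (yvar K n i ((σ 0).1 + 1))
      rw [h0, map_zero]; exact q4.symm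
    · show φ (z 2) = mk (yvar K n i ((σ 1).1 + 1))
      rw [h1]; exact hφz 2
    · show φ (- x 2) = mk (yvar K n i ((σ 2).1 + 1))
      rw [h2, map_neg, hφx 2]; exact neg_neg _
  · intro D _ ev ι f1 f2 f3 f4 h g hg
    have e0 := h (σ 0)
    have e1 := h (σ 1)
    have e2 := h (σ 2)
    rw [h0] at e0
    rw [h1] at f1 f3 e1
    rw [h2] at f2 f4 e2
    rw [Equiv.symm_apply_apply] at e0 e1 e2
    replace e0 : ev (yvar K n i (khat i)) = ι 0 := e0
    replace e1 : ev (yvar K n i 1) = ι (z 2) := e1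
    replace e2 : ev (yvar K n i (kcol i)) = ι (- x 2) := e2
    rcases hg with rfl | rfl | rfl | rfl
    · rw [map_add, map_mul, map_mul, f1, f2, e1, e2, ← map_mul, ← map_mul, ← map_add,
        hxz 0 2, show x 2 * z 0 + z 0 * -x 2 = 0 by ring, map_zero]
    · rw [map_add, map_mul, map_mul, f3, f4, e1, e2, ← map_mul, ← map_mul, ← map_add,
        hxz 1 2, show x 2 * z 1 + z 1 * -x 2 = 0 by ring, map_zero]
    · rw [map_sub, map_mul, map_mul, f1, f2, f3, f4, ← map_mul, ← map_mul, ← map_sub,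
        hxz 0 1, show x 1 * z 0 - z 0 * x 1 = 0 by ring, map_zero]
    · rw [e0, map_zero]

theorem pathGen_perm (K : Type) [Field K] (n a j : ℕ) :
    pathGen K n a = yvar K n a (khat j) * yvar K n (a + 1) (khat j) +
      yvar K n a 1 * yvar K n (a + 1) 1 +
      yvar K n a (kcol j) * yvar K n (a + 1) (kcol j) := by
  obtain ⟨σ, h0, h1, h2⟩ := exists_perm j
  rw [pathGen, ← Equiv.sum_comp σ, Fin.sum_univ_three, h0, h1, h2]

theorem pathGen_mem (K : Type) [Field K] (n a : ℕ) (h1 : 1 ≤ a) (h2 : a + 1 ≤ n) :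
    pathGen K n a ∈ pathLSS K n := Ideal.subset_span ⟨a, h1, h2, rfl⟩

theorem except_le (K : Type) [Field K] (n i : ℕ) : exceptIdeal K n i ≤ pathLSS K n := by
  apply Ideal.span_mono
  rintro g ⟨a, h1, h2, -, -, rfl⟩
  exact ⟨a, h1, h2, rfl⟩

theorem y_mem_P (K : Type) [Field K] (n i : ℕ) (c : Fin 3) :
    yvar K n i (c.1 + 1) ∈ Pideal K n i := by
  apply Ideal.mem_sup_left
  apply Ideal.subset_span
  fin_cases c <;> simp

theorem khat_mem_P (K : Type) [Field K] (n i : ℕ) : yvar K n i (khat i) ∈ Pideal K n i := by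
  obtain ⟨σ, h0, h1, h2⟩ := exists_perm i
  rw [← h0]; exact y_mem_P K n i _

theorem khat_mem_Q (K : Type) [Field K] (n i : ℕ) : yvar K n i (khat i) ∈ Qideal K n i :=
  Ideal.mem_sup_left (Ideal.subset_span (by simp))

theorem lss_le_P (K : Type) [Field K] (n i : ℕ) (hi : 2 ≤ i) : pathLSS K n ≤ Pideal K n i := by
  rw [pathLSS, Ideal.span_le]
  rintro g ⟨a, h1, h2, rfl⟩
  by_cases h3 : a = i - 1
  · have : a + 1 = i := by omega
    rw [pathGen, this]
    exact Ideal.sum_mem _ (fun c _ => Ideal.mul_mem_left _ _ (y_mem_P K n i c))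
  · by_cases h4 : a = i
    · subst h4
      rw [pathGen]
      exact Ideal.sum_mem _ (fun c _ => Ideal.mul_mem_right _ _ (y_mem_P K n a c))
    · exact Ideal.mem_sup_right (Ideal.subset_span ⟨a, h1, h2, h3, h4, rfl⟩)

theorem lss_le_Q (K : Type) [Field K] (n i : ℕ) (hi : 2 ≤ i) : pathLSS K n ≤ Qideal K n i := by
  rw [pathLSS, Ideal.span_le]
  rintro g ⟨a, h1, h2, rfl⟩
  by_cases h3 : a = i - 1
  · have h5 : a + 1 = i := by omega
    rw [pathGen_perm K n a i, h5, h3, add_assoc]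
    refine add_mem (Ideal.mul_mem_left _ _ (khat_mem_Q K n i)) ?_
    exact Ideal.mem_sup_left (Ideal.subset_span (by simp))
  · by_cases h4 : a = i
    · subst h4
      rw [pathGen_perm K n a a, add_assoc]
      refine add_mem (Ideal.mul_mem_right _ _ (khat_mem_Q K n a)) ?_
      rw [mul_comm (yvar K n a 1), mul_comm (yvar K n a (kcol a))]
      exact Ideal.mem_sup_left (Ideal.subset_span (by simp))
    · exact Ideal.mem_sup_right (Ideal.subset_span ⟨a, h1, h2, h3, h4, rfl⟩)

theorem pathProd_mem (K : Type) [Field K] (n i : ℕ) (hi : 2 ≤ i) (hin : i + 1 ≤ n)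
    (T : Ideal (MvPolynomial (Fin n × Fin 3) K)) (h : yvar K n i (khat i) ∈ T) :
    pathProd K n ∈ T :=
  T.mem_of_dvd (Finset.dvd_prod_of_mem (fun i => yvar K n i (khat i))
    (Finset.mem_Icc.2 ⟨hi, by omega⟩)) h

theorem cover (K : Type) [Field K] (n : ℕ) (q : Ideal (MvPolynomial (Fin n × Fin 3) K))
    (hq : q.IsPrime) (hL : pathLSS K n ≤ q) (hx : pathProd K n ∈ q) :
    ∃ i, 2 ≤ i ∧ i + 1 ≤ n ∧ (Pideal K n i ≤ q ∨ Qideal K n i ≤ q) := by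
  rw [pathProd, hq.prod_mem_iff] at hx
  obtain ⟨i, hi, hx⟩ := hx
  rw [Finset.mem_Icc] at hi
  refine ⟨i, hi.1, by omega, ?_⟩
  have h1 := hL (pathGen_mem K n (i - 1) (by omega) (by omega))
  have h2 := hL (pathGen_mem K n i (by omega) (by omega))
  rw [pathGen_perm K n _ i, Nat.sub_add_cancel (by omega : 1 ≤ i), add_assoc] at h1
  rw [pathGen_perm K n _ i, add_assoc] at h2
  replace h1 := (Ideal.add_mem_iff_right _ (q.mul_mem_left _ hx)).1 h1
  replace h2 := (Ideal.add_mem_iff_right _ (q.mul_mem_right _ hx)).1 h2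
  rw [mul_comm (yvar K n i 1), mul_comm (yvar K n i (kcol i))] at h2
  have hE : exceptIdeal K n i ≤ q := (except_le K n i).trans hL
  by_cases hdet : yvar K n (i - 1) 1 * yvar K n (i + 1) (kcol i) -
         yvar K n (i - 1) (kcol i) * yvar K n (i + 1) 1 ∈ q
  · right
    refine sup_le ?_ hE
    rw [Ideal.span_le]
    rintro g (rfl | rfl | rfl | rfl)
    · exact h1
    · exact h2
    · exact hdet
    · exact hx
  · left
    have m1 : yvar K n i 1 ∈ q := by
      refine (hq.mem_or_mem ?_).resolve_left hdet
      have := sub_mem (q.mul_mem_left (yvar K n (i + 1) (kcol i)) h1)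
        (q.mul_mem_left (yvar K n (i - 1) (kcol i)) h2)
      convert this using 1
      ring
    have m2 : yvar K n i (kcol i) ∈ q := by
      refine (hq.mem_or_mem ?_).resolve_left hdet
      have := sub_mem (q.mul_mem_left (yvar K n (i - 1) 1) h2)
        (q.mul_mem_left (yvar K n (i + 1) 1) h1)
      convert this using 1
      ring
    have m : ∀ c : Fin 3, yvar K n i (c.1 + 1) ∈ q := by
      obtain ⟨σ, e0, e1, e2⟩ := exists_perm i
      intro c
      obtain ⟨c, rfl⟩ := σ.surjective c
      fin_cases c
      · show yvar K n i ((σ 0).1 + 1) ∈ q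
        rw [e0]; exact hx
      · show yvar K n i ((σ 1).1 + 1) ∈ q
        rw [e1]; exact m1
      · show yvar K n i ((σ 2).1 + 1) ∈ q
        rw [e2]; exact m2
    refine sup_le ?_ hE
    rw [Ideal.span_le]
    rintro g (rfl | rfl | rfl)
    · exact m 0
    · exact m 1
    · exact m 2

/-- Evaluation of polynomials at a `K`-point given by vectors `Z j`. -/
noncomputable def evPt (K : Type) [Field K] (n : ℕ) (Z : ℕ → Fin 3 → K) :
    MvPolynomial (Fin n × Fin 3) K →+* K :=
  MvPolynomial.eval₂Hom (RingHom.id K) (fun v : Fin n × Fin 3 => Z (v.1.1 + 1) v.2)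

theorem P_le_ker (K : Type) [Field K] (n i : ℕ) (hi : 2 ≤ i) (hin : i + 1 ≤ n)
    (Z : ℕ → Fin 3 → K) (h0 : ∀ c, Z i c = 0) (hZ : ∀ a c, Z a c * Z (a + 1) c = 0) :
    Pideal K n i ≤ RingHom.ker (evPt K n Z) := by
  have m : ∀ c : Fin 3, evPt K n Z (yvar K n i (c.1 + 1)) = 0 := by
    intro c
    rw [evPt, eval_yvar _ _ _ _ _ (by omega) (by omega), h0]
  refine sup_le ?_ ?_
  · rw [Ideal.span_le]
    rintro g (rfl | rfl | rfl)
    · exact m 0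
    · exact m 1
    · exact m 2
  · rw [exceptIdeal, Ideal.span_le]
    rintro g ⟨a, h1, h2, h3, h4, rfl⟩
    rw [SetLike.mem_coe, RingHom.mem_ker, evPt, eval_pathGen _ _ _ _ h1 h2]
    exact Finset.sum_eq_zero (fun c _ => hZ a c)

theorem Q_le_ker (K : Type) [Field K] (n i : ℕ) (hi : 2 ≤ i) (hin : i + 1 ≤ n)
    (Z : ℕ → Fin 3 → K) (h0 : ∀ c : Fin 3, c.1 + 1 = khat i → Z i c = 0)
    (hZ : ∀ a b c d, a ≠ b → Z a c * Z b d = 0) :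
    Qideal K n i ≤ RingHom.ker (evPt K n Z) := by
  obtain ⟨σ, e0, e1, e2⟩ := exists_perm i
  have ev : ∀ j (c : Fin 3) (d : ℕ), c.1 + 1 = d → 1 ≤ j → j ≤ n →
  evPt K n Z (yvar K n j d) = Z j c := by
    rintro j c d rfl h1 h2
    exact eval_yvar _ _ _ _ _ h1 h2
  refine sup_le ?_ ?_
  · rw [Ideal.span_le]
    rintro g (rfl | rfl | rfl | rfl)
    · rw [SetLike.mem_coe, RingHom.mem_ker, map_add, map_mul, map_mul]
      rw [ev (i - 1) _ _ e1 (by omega) (by omega),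
        ev (i) _ _ e1 (by omega) (by omega),
        ev (i - 1) _ _ e2 (by omega) (by omega),
        ev (i) _ _ e2 (by omega) (by omega),
        hZ _ _ _ _ (by omega), hZ _ _ _ _ (by omega), add_zero]
    · rw [SetLike.mem_coe, RingHom.mem_ker, map_add, map_mul, map_mul]
      rw [ev (i + 1) _ _ e1 (by omega) (by omega),
        ev (i) _ _ e1 (by omega) (by omega),
        ev (i + 1) _ _ e2 (by omega) (by omega),
        ev (i) _ _ e2 (by omega) (by omega),
        hZ _ _ _ _ (by omega), hZ _ _ _ _ (by omega), add_zero]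
    · rw [SetLike.mem_coe, RingHom.mem_ker, map_sub, map_mul, map_mul]
      rw [ev (i - 1) _ _ e1 (by omega) (by omega),
        ev (i + 1) _ _ e2 (by omega) (by omega),
        ev (i - 1) _ _ e2 (by omega) (by omega),
        ev (i + 1) _ _ e1 (by omega) (by omega),
        hZ _ _ _ _ (by omega), hZ _ _ _ _ (by omega), sub_zero]
    · rw [SetLike.mem_coe, RingHom.mem_ker, ev i _ _ e0 (by omega) (by omega), h0 _ e0]
  · rw [exceptIdeal, Ideal.span_le]
    rintro g ⟨a, h1, h2, h3, h4, rfl⟩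
    rw [SetLike.mem_coe, RingHom.mem_ker, evPt, eval_pathGen _ _ _ _ h1 h2]
    exact Finset.sum_eq_zero (fun c _ => hZ a _ c _ (by omega))

/-- The point whose only nonzero coordinate is a `1` at vertex `m`, column `c₀`. -/
noncomputable def sPt (K : Type) [Field K] (m : ℕ) (c₀ : Fin 3) : ℕ → Fin 3 → K :=
  fun j c => if j = m ∧ c = c₀ then 1 else 0

theorem sPt_mul (K : Type) [Field K] (m : ℕ) (c₀ : Fin 3) (a b : ℕ) (c d : Fin 3) (h : a ≠ b) :
    sPt K m c₀ a c * sPt K m c₀ b d = 0 := by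
  unfold sPt
  by_cases h1 : a = m
  · have : b ≠ m := by omega
    simp [this]
  · simp [h1]

theorem not_mem_of_ker (K : Type) [Field K] (n m : ℕ) (h1 : 1 ≤ m) (h2 : m ≤ n) (c : Fin 3)
    (T : Ideal (MvPolynomial (Fin n × Fin 3) K)) (hT : T ≤ RingHom.ker (evPt K n (sPt K m c))) :
    yvar K n m (c.1 + 1) ∉ T := by
  intro h
  have h3 : evPt K n (sPt K m c) (yvar K n m (c.1 + 1)) = 0 := hT h
  rw [evPt, eval_yvar _ _ _ _ _ h1 h2] at h3
  simp [sPt] at h3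

theorem P_not_le (K : Type) [Field K] (n i j : ℕ) (hi : 2 ≤ i) (hin : i + 1 ≤ n) (hj : 2 ≤ j)
    (hjn : j + 1 ≤ n) : (i ≠ j → ¬ Pideal K n j ≤ Pideal K n i) ∧
      ¬ Pideal K n j ≤ Qideal K n i := by
  constructor
  · intro hij h
    refine not_mem_of_ker K n j (by omega) (by omega) 0 _ ?_ (h (y_mem_P K n j 0))
    exact P_le_ker K n i hi hin _ (by intro c; simp [sPt, hij])
      (fun a c => sPt_mul _ _ _ _ _ _ _ (by omega))
  · intro h
    refine not_mem_of_ker K n j (by omega) (by omega) 0 _ ?_ (h (y_mem_P K n j 0))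
    refine Q_le_ker K n i hi hin _ ?_ (fun a b c d hab => sPt_mul _ _ _ _ _ _ _ hab)
    intro c hc
    have : c ≠ 0 := by
      rintro rfl
      unfold khat at hc
      split_ifs at hc <;> simp at hc
    simp [sPt, this]

theorem Q_not_le (K : Type) [Field K] (n i j : ℕ) (hi : 2 ≤ i) (hin : i + 1 ≤ n) (hj : 2 ≤ j)
    (hjn : j + 1 ≤ n) : (i ≠ j → ¬ Qideal K n j ≤ Qideal K n i) ∧
      ¬ Qideal K n j ≤ Pideal K n i := by
  obtain ⟨σ, e0, e1, e2⟩ := exists_perm j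
  have hk := khat_mem_Q K n j
  rw [← e0] at hk
  constructor
  · intro hij h
    refine not_mem_of_ker K n j (by omega) (by omega) (σ 0) _ ?_ (h hk)
    refine Q_le_ker K n i hi hin _ ?_ (fun a b c d hab => sPt_mul _ _ _ _ _ _ _ hab)
    intro c hc
    simp [sPt, hij]
  · intro h
    by_cases hij : i = j
    · subst hij
      let Z : ℕ → Fin 3 → K := fun a c => sPt K (i - 1) (σ 1) a c + sPt K (i + 1) (σ 2) a c
      have hZ : Pideal K n i ≤ RingHom.ker (evPt K n Z) := by
        apply P_le_ker K n i hi hin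
        · intro c
          have : i ≠ i - 1 := by omega
          simp [Z, sPt, this]
        · intro a c
          simp only [Z, sPt]
          by_cases g1 : a = i - 1
          · have k1 : a ≠ i + 1 := by omega
            have k2 : a + 1 ≠ i - 1 := by omega
            have k3 : a + 1 ≠ i + 1 := by omega
            simp only [k1, k2, k3, false_and, if_false, add_zero, mul_zero]
          · by_cases g2 : a = i + 1
            · have k2 : a + 1 ≠ i - 1 := by omega
              have k3 : a + 1 ≠ i + 1 := by omega
              simp only [k2, k3, false_and, if_false, add_zero, mul_zero]
            · simp only [g1, g2, false_and, if_false, add_zero, zero_mul]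
      have hd : yvar K n (i - 1) 1 * yvar K n (i + 1) (kcol i) -
         yvar K n (i - 1) (kcol i) * yvar K n (i + 1) 1 ∈ Qideal K n i :=
        Ideal.mem_sup_left (Ideal.subset_span (by simp))
      have ev : ∀ j (c : Fin 3) (d : ℕ), c.1 + 1 = d → 1 ≤ j → j ≤ n →
      evPt K n Z (yvar K n j d) = Z j c := by
        rintro j c d rfl h1 h2
        exact eval_yvar _ _ _ _ _ h1 h2
      have h3 := hZ (h hd)
      rw [RingHom.mem_ker, map_sub, map_mul, map_mul,
        ev (i - 1) _ _ e1 (by omega) (by omega),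
        ev (i + 1) _ _ e2 (by omega) (by omega),
        ev (i - 1) _ _ e2 (by omega) (by omega),
        ev (i + 1) _ _ e1 (by omega) (by omega)] at h3
      have k1 : i - 1 ≠ i + 1 := by omega
      have k2 : i + 1 ≠ i - 1 := by omega
      have k3 : σ 2 ≠ σ 1 := by
        rw [Ne, σ.injective.eq_iff]; decide
      simp [Z, sPt, k1, k2, k3] at h3
    · refine not_mem_of_ker K n j (by omega) (by omega) (σ 0) _ ?_ (h hk)
      exact P_le_ker K n i hi hin _ (by intro c; simp [sPt, hij])
        (fun a c => sPt_mul _ _ _ _ _ _ _ (by omega))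

/-- For the `n`-path graph with `n ≥ 3`, `d = 3` and `x = ∏_{i=2}^{n-1} y_{i k̂ᵢ}`:
the minimal primes of the principal ideal `(x) ⊆ R_G(3)` are exactly the images of
`P_2, …, P_{n-1}, Q_2, …, Q_{n-1}` in `R_G(3)`. -/
theorem path_minimal_primes (K : Type) [Field K] (n : ℕ) (hn : 3 ≤ n) :
    (Ideal.span {Ideal.Quotient.mk (pathLSS K n) (pathProd K n)}).minimalPrimes =
      {J | ∃ i : ℕ, 2 ≤ i ∧ i + 1 ≤ n ∧
        (J = Ideal.map (Ideal.Quotient.mk (pathLSS K n)) (Pideal K n i) ∨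
         J = Ideal.map (Ideal.Quotient.mk (pathLSS K n)) (Qideal K n i))} := by
  classical
  let 𝒯 : Set (Ideal (MvPolynomial (Fin n × Fin 3) K)) :=
    {T | ∃ i : ℕ, 2 ≤ i ∧ i + 1 ≤ n ∧ (T = Pideal K n i ∨ T = Qideal K n i)}
  have hprime : ∀ T ∈ 𝒯, T.IsPrime := by
    rintro T ⟨i, h1, h2, rfl | rfl⟩
    · exact Pideal_prime K n i h1 h2
    · exact Qideal_prime K n i h1 h2
  have hlss : ∀ T ∈ 𝒯, pathLSS K n ≤ T := by
    rintro T ⟨i, h1, h2, rfl | rfl⟩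
    · exact lss_le_P K n i h1
    · exact lss_le_Q K n i h1
  have hprod : ∀ T ∈ 𝒯, pathProd K n ∈ T := by
    rintro T ⟨i, h1, h2, rfl | rfl⟩
    · exact pathProd_mem K n i h1 h2 _ (khat_mem_P K n i)
    · exact pathProd_mem K n i h1 h2 _ (khat_mem_Q K n i)
  have hanti : ∀ T ∈ 𝒯, ∀ T' ∈ 𝒯, T' ≤ T → T' = T := by
    rintro T ⟨i, h1, h2, rfl | rfl⟩ T' ⟨j, h3, h4, rfl | rfl⟩ hle
    · by_contra hne
      exact (P_not_le K n i j h1 h2 h3 h4).1 (by rintro rfl; exact hne rfl) hle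
    · exact absurd hle (Q_not_le K n i j h1 h2 h3 h4).2
    · exact absurd hle (P_not_le K n i j h1 h2 h3 h4).2
    · by_contra hne
      exact (Q_not_le K n i j h1 h2 h3 h4).1 (by rintro rfl; exact hne rfl) hle
  set mk := Ideal.Quotient.mk (pathLSS K n) with hmk
  have hsurj : Function.Surjective mk := Ideal.Quotient.mk_surjective
  have hcm : ∀ T ∈ 𝒯, Ideal.comap mk (Ideal.map mk T) = T := by
    intro T hT
    rw [Ideal.comap_map_of_surjective _ hsurj, ← RingHom.ker_eq_comap_bot, hmk, Ideal.mk_ker]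
    exact sup_eq_left.2 (hlss T hT)
  have hmp : ∀ T ∈ 𝒯, (Ideal.map mk T).IsPrime := by
    intro T hT
    have := hprime T hT
    exact Ideal.map_isPrime_of_surjective hsurj (by rw [hmk, Ideal.mk_ker]; exact hlss T hT)
  have hmx : ∀ T ∈ 𝒯, Ideal.span {mk (pathProd K n)} ≤ Ideal.map mk T := by
    intro T hT
    rw [Ideal.span_singleton_le_iff_mem]
    exact Ideal.mem_map_of_mem _ (hprod T hT)
  have hcov : ∀ J : Ideal (MvPolynomial (Fin n × Fin 3) K ⧸ pathLSS K n), J.IsPrime →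
      Ideal.span {mk (pathProd K n)} ≤ J → ∃ T ∈ 𝒯, T ≤ Ideal.comap mk J := by
    intro J hJ hx
    rw [Ideal.span_singleton_le_iff_mem] at hx
    obtain ⟨i, h1, h2, h3⟩ := cover K n (Ideal.comap mk J) (Ideal.comap_isPrime mk J)
      (by
        intro p hp
        rw [Ideal.mem_comap, hmk, Ideal.Quotient.eq_zero_iff_mem.2 hp]
        exact zero_mem _) hx
    rcases h3 with h3 | h3
    · exact ⟨_, ⟨i, h1, h2, Or.inl rfl⟩, h3⟩
    · exact ⟨_, ⟨i, h1, h2, Or.inr rfl⟩, h3⟩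
  have hset : ∀ J : Ideal (MvPolynomial (Fin n × Fin 3) K ⧸ pathLSS K n),
      (∃ i : ℕ, 2 ≤ i ∧ i + 1 ≤ n ∧
        (J = Ideal.map mk (Pideal K n i) ∨ J = Ideal.map mk (Qideal K n i))) ↔
      ∃ T ∈ 𝒯, J = Ideal.map mk T := by
    intro J
    constructor
    · rintro ⟨i, h1, h2, rfl | rfl⟩
      · exact ⟨_, ⟨i, h1, h2, Or.inl rfl⟩, rfl⟩
      · exact ⟨_, ⟨i, h1, h2, Or.inr rfl⟩, rfl⟩
    · rintro ⟨T, ⟨i, h1, h2, rfl | rfl⟩, rfl⟩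
      · exact ⟨i, h1, h2, Or.inl rfl⟩
      · exact ⟨i, h1, h2, Or.inr rfl⟩
  ext J
  refine Iff.trans ?_ (hset J).symm
  constructor
  · rintro ⟨⟨hJ, hx⟩, hmin⟩
    obtain ⟨T, hT, hle⟩ := hcov J hJ hx
    have h1 : Ideal.map mk T ≤ J := Ideal.map_le_iff_le_comap.2 hle
    exact ⟨T, hT, le_antisymm (hmin ⟨hmp T hT, hmx T hT⟩ h1) h1⟩
  · rintro ⟨T, hT, rfl⟩
    refine ⟨⟨hmp T hT, hmx T hT⟩, ?_⟩
    rintro J ⟨hJ, hx⟩ hle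
    obtain ⟨T', hT', hle'⟩ := hcov J hJ hx
    have h2 : T' ≤ T := by
      rw [← hcm T hT]
      exact hle'.trans (Ideal.comap_mono hle)
    rw [← hanti T hT T' hT' h2]
    exact Ideal.map_le_iff_le_comap.2 hle'
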